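/- Let n ≥ 4 be an even integer, and let g, U be as follows: g is the symmetric (n+2)×(n+2) matrix with (indices 0,…,n+1) g_{ij} = 2 if 0 ≤ i,j ≤ n and i+j = n, g_{n+1,n+1} = 2, g_{ij} = 0 otherwise, and U is an open neighborhood of 0 in ℂ^{n+2}. Suppose F and F′ are two ℂ-analytic functions on U, each satisfying all of the following: (a) vanishing value and vanishing first and second partial derivatives at 0; (b) ∂_{y_0}∂_{y_a}∂_{y_b}(·) = g_{ab} identically for all a,b; (c) the WDVV equations Σ_{i,j} (∂_a∂_b∂_i(·)) g^{ij} (∂_j∂_c∂_d(·)) = Σ_{i,j} (∂_a∂_c∂_i(·)) g^{ij} (∂_j∂_b∂_d(·)) for all a,b,c,d; (d) n ∂_{y_1}(·) + Σ_{i=0}^{n}(1−i) y_i ∂_{y_i}(·) + (1 − n/2) y_{n+1} ∂_{y_{n+1}}(·) − (3−n)(·) equals a polynomial of total degree ≤ 2; (e) the same prescribed third partial derivatives at 0: ∂_{n+1}∂_{n+1}∂_0(·)(0) = 2, ∂_{n+1}∂_{n+1}∂_n(·)(0) = −4, ∂_i∂_j∂_k(·)(0) = 2 when i+j+k = n (0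 ≤ i,j,k ≤ n), ∂_i∂_{n−i}∂_n(·)(0) = 4 for 1 ≤ i ≤ n−1, ∂_i∂_j∂_k(·)(0) = 8 when i+j+k = 2n with 0 ≤ i,j,k ≤ n and i,j,k ≠ n, ∂_n∂_n∂_n(·)(0) = 8, all other third derivatives at 0 vanishing. Then F = F′ on some neighborhood of 0. -/

import Mathlib

open Finset

/-- The partial derivative `∂F/∂yᵢ` of a function `F` on `ℂ^{n+2}` (coordinates
`y 0, …, y (n+1)`), as a function on `ℂ^{n+2}`. -/
noncomputable def pd (n : ℕ) (i : Fin (n + 2)) (F : (Fin (n + 2) → ℂ) → ℂ) :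
    (Fin (n + 2) → ℂ) → ℂ :=
  fun y => deriv (fun t => F (Function.update y i t)) (y i)

/-- The flat metric `g`: `g_{ij} = 2` if `0 ≤ i, j ≤ n` and `i + j = n`, `g_{n+1,n+1} = 2`,
and `g_{ij} = 0` otherwise. -/
noncomputable def gmat (n : ℕ) (i j : Fin (n + 2)) : ℂ :=
  if ((i : ℕ) ≤ n ∧ (j : ℕ) ≤ n ∧ (i : ℕ) + (j : ℕ) = n) ∨
      ((i : ℕ) = n + 1 ∧ (j : ℕ) = n + 1) then 2 else 0

/-- The inverse metric `g^{ij}`: `g^{ij} = 1/2` at exactly the entries where `g_{ij} = 2`,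
and `0` elsewhere; this is the inverse matrix of `gmat n`. -/
noncomputable def ginv (n : ℕ) (i j : Fin (n + 2)) : ℂ :=
  if ((i : ℕ) ≤ n ∧ (j : ℕ) ≤ n ∧ (i : ℕ) + (j : ℕ) = n) ∨
      ((i : ℕ) = n + 1 ∧ (j : ℕ) = n + 1) then 1 / 2 else 0

open Classical in
/-- The prescribed third partial derivatives at the origin (the length-3 correlators of the
quadric `Qⁿ`): as a symmetric function of the multiset of indices `{a, b, c}`,
`{n+1, n+1, 0} ↦ 2`, `{n+1, n+1, n} ↦ −4`, `{i, j, k} ↦ 2` if `i,j,k ≤ n` and `i+j+k = n`,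
`{i, n−i, n} ↦ 4` for `1 ≤ i ≤ n−1`, `{i, j, k} ↦ 8` if `i,j,k ≤ n`, `i+j+k = 2n` and
`i,j,k ≠ n`, `{n, n, n} ↦ 8`, and `0` otherwise. -/
noncomputable def corr3 (n : ℕ) (a b c : Fin (n + 2)) : ℂ :=
  if ({(a : ℕ), (b : ℕ), (c : ℕ)} : Multiset ℕ) = {n + 1, n + 1, 0} then 2
  else if ({(a : ℕ), (b : ℕ), (c : ℕ)} : Multiset ℕ) = {n + 1, n + 1, n} then -4
  else if (a : ℕ) ≤ n ∧ (b : ℕ) ≤ n ∧ (c : ℕ) ≤ n ∧ (a : ℕ) + (b : ℕ) + (c : ℕ) = n then 2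
  else if ∃ i : ℕ, 1 ≤ i ∧ i ≤ n - 1 ∧
      ({(a : ℕ), (b : ℕ), (c : ℕ)} : Multiset ℕ) = {i, n - i, n} then 4
  else if (a : ℕ) ≤ n ∧ (b : ℕ) ≤ n ∧ (c : ℕ) ≤ n ∧
      (a : ℕ) + (b : ℕ) + (c : ℕ) = 2 * n ∧ (a : ℕ) ≠ n ∧ (b : ℕ) ≠ n ∧ (c : ℕ) ≠ n then 8
  else if ({(a : ℕ), (b : ℕ), (c : ℕ)} : Multiset ℕ) = {n, n, n} then 8
  else 0

/-- `F` is a potential of the Frobenius manifold mirror to the quadric `Qⁿ` on the open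
neighborhood `U` of `0`: `F` is `ℂ`-analytic on `U`; `F` and its first and second partial
derivatives vanish at `0`; `∂₀∂ₐ∂_b F = g_{ab}` on `U` (flat identity `∂_{y₀}`); the WDVV
equations hold on `U`; the Euler-field combination
`n ∂_{y₁}F + ∑_{i=0}^{n} (1−i) yᵢ ∂_{yᵢ}F + (1 − n/2) y_{n+1} ∂_{y_{n+1}}F − (3−n) F`
coincides on `U` with a polynomial of total degree `≤ 2`; and the third partial derivatives
at `0` are the prescribed length-3 correlators `corr3` (all others vanishing). -/
def IsQuadricFrobeniusPotential (n : ℕ) (U : Set (Fin (n + 2) → ℂ))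
    (F : (Fin (n + 2) → ℂ) → ℂ) : Prop :=
  AnalyticOnNhd ℂ F U ∧
  F 0 = 0 ∧ (∀ i, pd n i F 0 = 0) ∧ (∀ i j, pd n i (pd n j F) 0 = 0) ∧
  (∀ a b, ∀ y ∈ U, pd n (0 : Fin (n + 2)) (pd n a (pd n b F)) y = gmat n a b) ∧
  (∀ a b c d, ∀ y ∈ U,
    (∑ i : Fin (n + 2), ∑ j : Fin (n + 2),
        pd n a (pd n b (pd n i F)) y * ginv n i j * pd n j (pd n c (pd n d F)) y)
      = ∑ i : Fin (n + 2), ∑ j : Fin (n + 2),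
          pd n a (pd n c (pd n i F)) y * ginv n i j * pd n j (pd n b (pd n d F)) y) ∧
  (∃ p : MvPolynomial (Fin (n + 2)) ℂ, p.totalDegree ≤ 2 ∧
    ∀ y ∈ U,
      (n : ℂ) * pd n (1 : Fin (n + 2)) F y
          + (∑ i : Fin (n + 1),
              (1 - ((i : ℕ) : ℂ)) * y i.castSucc * pd n i.castSucc F y)
          + (1 - (n : ℂ) / 2) * y (Fin.last (n + 1)) * pd n (Fin.last (n + 1)) F y
          - (3 - (n : ℂ)) * F y
        = MvPolynomial.eval y p) ∧
  (∀ a b c, pd n a (pd n b (pd n c F)) 0 = corr3 n a b c)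

section PartialDerivatives

variable {n : ℕ} {f h : (Fin (n + 2) → ℂ) → ℂ} {x : Fin (n + 2) → ℂ}

lemma hasDerivAt_update_comp (i : Fin (n + 2)) (hf : DifferentiableAt ℂ f x) :
    HasDerivAt (fun t => f (Function.update x i t)) (fderiv ℂ f x (Pi.single i 1)) (x i) := by
  have h1 := hasDerivAt_update x i (x i)
  have h2 : HasFDerivAt f (fderiv ℂ f x) (Function.update x i (x i)) := by
    simpa using hf.hasFDerivAt
  exact h2.comp_hasDerivAt (x i) h1

lemma pd_eq_fderiv (i : Fin (n + 2)) (hf : DifferentiableAt ℂ f x) :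
    pd n i f x = fderiv ℂ f x (Pi.single i 1) :=
  (hasDerivAt_update_comp i hf).deriv

lemma pd_eventuallyEq_fderiv (i : Fin (n + 2)) (hf : AnalyticAt ℂ f x) :
    pd n i f =ᶠ[nhds x] fun y => fderiv ℂ f y (Pi.single i 1) := by
  filter_upwards [hf.eventually_analyticAt] with y hy
  exact pd_eq_fderiv i hy.differentiableAt

lemma AnalyticAt.pd (i : Fin (n + 2)) (hf : AnalyticAt ℂ f x) :
    AnalyticAt ℂ (_root_.pd n i f) x := by
  refine AnalyticAt.congr ?_ (pd_eventuallyEq_fderiv i hf).symm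
  exact ((ContinuousLinearMap.apply ℂ ℂ (Pi.single i 1 : Fin (n + 2) → ℂ)).analyticAt _).comp
    hf.fderiv

lemma pd_congr (i : Fin (n + 2)) (hfh : f =ᶠ[nhds x] h) :
    pd n i f =ᶠ[nhds x] pd n i h := by
  filter_upwards [hfh.eventually_nhds] with y hy
  have ht : Filter.Tendsto (fun t => Function.update y i t) (nhds (y i)) (nhds y) := by
    have : Continuous (fun t : ℂ => Function.update y i t) := by fun_prop
    simpa using this.tendsto (y i)
  exact Filter.EventuallyEq.deriv_eq (ht hy)

lemma pd_comm (i j : Fin (n + 2)) (hf : AnalyticAt ℂ f x) :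
    pd n i (pd n j f) =ᶠ[nhds x] pd n j (pd n i f) := by
  have key : ∀ i j : Fin (n + 2), ∀ y, AnalyticAt ℂ f y →
      pd n i (pd n j f) y = fderiv ℂ (fderiv ℂ f) y (Pi.single i 1) (Pi.single j 1) := by
    intro i j y hy
    rw [(pd_congr i (pd_eventuallyEq_fderiv j hy)).self_of_nhds, pd_eq_fderiv]
    · rw [fderiv_clm_apply hy.fderiv.differentiableAt (differentiableAt_const _)]
      simp
    · exact hy.fderiv.differentiableAt.clm_apply (differentiableAt_const _)
  filter_upwards [hf.eventually_analyticAt] with y hy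
  rw [key i j y hy, key j i y hy]
  exact (hy.contDiffAt (n := ⊤)).isSymmSndFDerivAt (by simp) _ _

lemma pd_add (i : Fin (n + 2)) (hf : AnalyticAt ℂ f x) (hh : AnalyticAt ℂ h x) :
    pd n i (f + h) =ᶠ[nhds x] pd n i f + pd n i h := by
  filter_upwards [hf.eventually_analyticAt, hh.eventually_analyticAt] with y hfy hhy
  exact ((hasDerivAt_update_comp i hfy.differentiableAt).differentiableAt.hasDerivAt.add
    (hasDerivAt_update_comp i hhy.differentiableAt).differentiableAt.hasDerivAt).deriv

lemma pd_mul (i : Fin (n + 2)) (hf : AnalyticAt ℂ f x) (hh : AnalyticAt ℂ h x) :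
    pd n i (f * h) =ᶠ[nhds x] pd n i f * h + f * pd n i h := by
  filter_upwards [hf.eventually_analyticAt, hh.eventually_analyticAt] with y hfy hhy
  have := ((hasDerivAt_update_comp i hfy.differentiableAt).differentiableAt.hasDerivAt.mul
    (hasDerivAt_update_comp i hhy.differentiableAt).differentiableAt.hasDerivAt).deriv
  simp only [Function.update_eq_self] at this
  exact this

lemma pd_const (i : Fin (n + 2)) (c : ℂ) : pd n i (fun _ => c) = 0 := by
  funext y
  simp [pd]

lemma pd_coord (i j : Fin (n + 2)) :
    pd n i (fun y => y j) = fun _ => if i = j then 1 else 0 := by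
  funext y
  by_cases hij : i = j
  · subst hij
    simp [pd]
  · simp [pd, hij, Function.update_of_ne (Ne.symm hij)]

lemma pd_const_smul (i : Fin (n + 2)) (c : ℂ) : pd n i (c • f) = c • pd n i f := by
  funext y
  simp [pd]

/-- The iterated partial derivative along a list of coordinate directions; the head of the
list is differentiated first. -/
noncomputable def iterPd (n : ℕ) :
    List (Fin (n + 2)) → ((Fin (n + 2) → ℂ) → ℂ) → (Fin (n + 2) → ℂ) → ℂ
  | [], f => f
  | i :: L, f => iterPd n L (pd n i f)

lemma iterPd_append (L L' : List (Fin (n + 2))) :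
    iterPd n (L ++ L') f = iterPd n L' (iterPd n L f) := by
  induction L generalizing f with
  | nil => rfl
  | cons i L ih => exact ih

lemma AnalyticAt.iterPd (L : List (Fin (n + 2))) (hf : AnalyticAt ℂ f x) :
    AnalyticAt ℂ (_root_.iterPd n L f) x := by
  induction L generalizing f with
  | nil => exact hf
  | cons i L ih => exact ih (hf.pd i)

lemma iterPd_congr (L : List (Fin (n + 2))) (hfh : f =ᶠ[nhds x] h) :
    iterPd n L f =ᶠ[nhds x] iterPd n L h := by
  induction L generalizing f h with
  | nil => exact hfh
  | cons i L ih => exact ih (pd_congr i hfh)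

lemma iterPd_perm {L L' : List (Fin (n + 2))} (hL : L.Perm L') (hf : AnalyticAt ℂ f x) :
    iterPd n L f =ᶠ[nhds x] iterPd n L' f := by
  induction hL generalizing f with
  | nil => rfl
  | cons i _ ih => exact ih (hf.pd i)
  | swap i j L => exact iterPd_congr L (pd_comm i j hf)
  | trans _ _ ih₁ ih₂ => exact (ih₁ hf).trans (ih₂ hf)

lemma iterPd_add (L : List (Fin (n + 2))) (hf : AnalyticAt ℂ f x) (hh : AnalyticAt ℂ h x) :
    iterPd n L (f + h) =ᶠ[nhds x] iterPd n L f + iterPd n L h := by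
  induction L generalizing f h with
  | nil => rfl
  | cons i L ih => exact (iterPd_congr L (pd_add i hf hh)).trans (ih (hf.pd i) (hh.pd i))

lemma iterPd_const_smul (L : List (Fin (n + 2))) (c : ℂ) :
    iterPd n L (c • f) = c • iterPd n L f := by
  induction L generalizing f with
  | nil => rfl
  | cons i L ih => simp only [iterPd, pd_const_smul, ih]

lemma iterPd_zero (L : List (Fin (n + 2))) : iterPd n L 0 = 0 := by
  simpa using iterPd_const_smul (f := 0) L 0

lemma iterPd_sub (L : List (Fin (n + 2))) (hf : AnalyticAt ℂ f x) (hh : AnalyticAt ℂ h x) :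
    iterPd n L (f - h) =ᶠ[nhds x] iterPd n L f - iterPd n L h := by
  have := iterPd_add L hf (hh.const_smul (c := (-1 : ℂ)))
  rw [iterPd_const_smul] at this
  simpa [sub_eq_add_neg] using this

lemma iterPd_sum {ι : Type*} (s : Finset ι) (L : List (Fin (n + 2)))
    {f : ι → (Fin (n + 2) → ℂ) → ℂ} (hf : ∀ k, AnalyticAt ℂ (f k) x) :
    iterPd n L (∑ k ∈ s, f k) =ᶠ[nhds x] ∑ k ∈ s, iterPd n L (f k) := by
  classical
  induction s using Finset.induction_on with
  | empty => simp [iterPd_zero]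
  | insert a s ha ih =>
    rw [Finset.sum_insert ha, Finset.sum_insert ha]
    exact (iterPd_add L (hf a) (s.analyticAt_sum fun k _ => hf k)).trans
      ((Filter.EventuallyEq.refl _ _).add ih)

lemma iterPd_mul_of_order (S : List (Fin (n + 2))) (hf : AnalyticAt ℂ f x)
    (hh : AnalyticAt ℂ h x) (hvan : ∀ L : List (Fin (n + 2)), L.length < S.length →
      iterPd n L f x = 0) :
    iterPd n S (f * h) x = iterPd n S f x * h x := by
  induction S generalizing f h with
  | nil => rfl
  | cons s S ih =>
    have e := iterPd_congr S (pd_mul s hf hh)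
    have e' := iterPd_add S ((hf.pd s).mul hh) (hf.mul (hh.pd s))
    have h1 := ih (hf.pd s) hh fun L hL => hvan (s :: L) (by simpa using hL)
    have h2 := ih hf (hh.pd s) fun L hL => hvan L (by simp; omega)
    have h3 := hvan S (by simp)
    change iterPd n S (pd n s (f * h)) x = _
    rw [e.self_of_nhds, e'.self_of_nhds, Pi.add_apply, h1, h2, h3]
    simp [iterPd]

lemma iterPd_replicate_mul_of_order (z : Fin (n + 2)) (k : ℕ) (hf : AnalyticAt ℂ f x)
    (hh : AnalyticAt ℂ h x) (hvan : ∀ L : List (Fin (n + 2)), L.length < k →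
      iterPd n L f x = 0) :
    iterPd n (List.replicate (k + 1) z) (f * h) x =
      iterPd n (List.replicate (k + 1) z) f x * h x +
        (k + 1) * iterPd n (List.replicate k z) f x * pd n z h x := by
  induction k generalizing f with
  | zero =>
    change pd n z (f * h) x = pd n z f x * h x + _ * f x * _
    rw [(pd_mul z hf hh).self_of_nhds]
    simp
  | succ k ih =>
    have e := iterPd_congr (List.replicate (k + 1) z) (pd_mul z hf hh)
    have e' := iterPd_add (List.replicate (k + 1) z) ((hf.pd z).mul hh) (hf.mul (hh.pd z))
    have h1 := ih (hf.pd z) fun L hL => hvan (z :: L) (by simpa using hL)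
    have h2 := iterPd_mul_of_order (List.replicate (k + 1) z) hf (hh.pd z)
      fun L hL => hvan L (by simpa using hL)
    change iterPd n (List.replicate (k + 1) z) (pd n z (f * h)) x = _
    rw [e.self_of_nhds, e'.self_of_nhds, Pi.add_apply, h1, h2]
    change iterPd n (List.replicate (k + 1) z) (pd n z f) x * h x +
      (k + 1) * iterPd n (List.replicate (k + 1) z) f x * pd n z h x + _ =
      iterPd n (List.replicate (k + 1) z) (pd n z f) x * h x + _
    push_cast
    ring

lemma iteratedFDeriv_apply_const_eq_zero (k : ℕ) (v : Fin (n + 2) → ℂ) (hf : AnalyticAt ℂ f x)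
    (hvan : ∀ L : List (Fin (n + 2)), iterPd n L f x = 0) :
    iteratedFDeriv ℂ k f x (fun _ => v) = 0 := by
  induction k generalizing f with
  | zero => simpa [iterPd] using hvan []
  | succ k ih =>
    have e : (fun y => fderiv ℂ f y v) =ᶠ[nhds x] ∑ i, v i • pd n i f := by
      filter_upwards [hf.eventually_analyticAt] with y hy
      have hv : v = ∑ i, v i • (Pi.single i 1 : Fin (n + 2) → ℂ) := by
        simpa using (pi_eq_sum_univ' v)
      conv_lhs => rw [hv]
      simp [pd_eq_fderiv _ hy.differentiableAt]
    have hA : ∀ i, AnalyticAt ℂ (v i • pd n i f) x := fun i => (hf.pd i).const_smul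
    rw [iteratedFDeriv_succ_apply_right]
    have e2 := congrArg (fun m => m fun _ => v)
      ((ContinuousLinearMap.apply ℂ ℂ v).iteratedFDeriv_comp_left (i := k) (n := ⊤)
        hf.fderiv.contDiffAt le_top)
    refine Eq.trans e2.symm ?_
    change iteratedFDeriv ℂ k (fun y => fderiv ℂ f y v) x (fun _ => v) = 0
    rw [(e.iteratedFDeriv ℂ k).self_of_nhds]
    refine ih (Finset.univ.analyticAt_sum fun i _ => hA i) fun L => ?_
    rw [(iterPd_sum _ _ hA).self_of_nhds, Finset.sum_apply]
    refine Finset.sum_eq_zero fun i _ => ?_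
    rw [iterPd_const_smul, Pi.smul_apply, show iterPd n L (pd n i f) x = 0 from hvan (i :: L),
      smul_zero]

lemma eventuallyEq_zero_of_iterPd (hf : AnalyticAt ℂ f x)
    (hvan : ∀ L : List (Fin (n + 2)), iterPd n L f x = 0) : f =ᶠ[nhds x] 0 := by
  obtain ⟨p, r, hp⟩ := hf
  have hp' : HasFPowerSeriesAt f p x := ⟨r, hp⟩
  filter_upwards [hp'.eventually_hasSum_sub] with y hy
  have hz : ∀ k, p k (fun _ => y - x) = 0 := by
    intro k
    have h1 := hp.factorial_smul (y - x) k
    rw [iteratedFDeriv_apply_const_eq_zero k _ ⟨p, r, hp⟩ hvan] at h1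
    simpa [Nat.factorial_ne_zero] using h1
  simp only [hz] at hy
  exact hy.unique hasSum_zero

end PartialDerivatives

section EulerField

variable {n : ℕ} {f : (Fin (n + 2) → ℂ) → ℂ} {x : Fin (n + 2) → ℂ}

/-- The first-order operator `c ∂_e + ∑ᵢ wᵢ yᵢ ∂ᵢ`. -/
noncomputable def eulerOp (n : ℕ) (c : ℂ) (e : Fin (n + 2)) (w : Fin (n + 2) → ℂ)
    (f : (Fin (n + 2) → ℂ) → ℂ) : (Fin (n + 2) → ℂ) → ℂ :=
  c • pd n e f + ∑ i, w i • ((fun y => y i) * pd n i f)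

lemma analyticAt_coord_mul_pd (i : Fin (n + 2)) (hf : AnalyticAt ℂ f x) :
    AnalyticAt ℂ ((fun y => y i) * pd n i f) x :=
  ((ContinuousLinearMap.proj (R := ℂ) (φ := fun _ : Fin (n + 2) => ℂ) i).analyticAt x).mul
    (hf.pd i)

lemma AnalyticAt.eulerOp (c : ℂ) (e : Fin (n + 2)) (w : Fin (n + 2) → ℂ)
    (hf : AnalyticAt ℂ f x) : AnalyticAt ℂ (_root_.eulerOp n c e w f) x :=
  (hf.pd e).const_smul.add
    (Finset.univ.analyticAt_sum fun i _ => (analyticAt_coord_mul_pd i hf).const_smul)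

lemma pd_eulerOp (c : ℂ) (e : Fin (n + 2)) (w : Fin (n + 2) → ℂ) (a : Fin (n + 2))
    (hf : AnalyticAt ℂ f x) :
    pd n a (eulerOp n c e w f) =ᶠ[nhds x] eulerOp n c e w (pd n a f) + w a • pd n a f := by
  have hA : ∀ i, AnalyticAt ℂ (w i • ((fun y => y i) * pd n i f)) x := fun i =>
    (analyticAt_coord_mul_pd i hf).const_smul
  have h1 := pd_add a ((hf.pd e).const_smul (c := c)) (Finset.univ.analyticAt_sum fun i _ => hA i)
  have h2 := iterPd_sum Finset.univ [a] hA
  have h3 : ∀ᶠ y in nhds x, ∀ i, pd n a ((fun y => y i) * pd n i f) y =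
      (pd n a (fun y : Fin (n + 2) → ℂ => y i) * pd n i f +
        (fun y : Fin (n + 2) → ℂ => y i) * pd n a (pd n i f)) y :=
    Filter.eventually_all.2 fun i => pd_mul a
      ((ContinuousLinearMap.proj (R := ℂ) (φ := fun _ : Fin (n + 2) => ℂ) i).analyticAt x)
      (hf.pd i)
  have h4 : ∀ᶠ y in nhds x, ∀ i, pd n a (pd n i f) y = pd n i (pd n a f) y :=
    Filter.eventually_all.2 fun i => pd_comm a i hf
  filter_upwards [h1, h2, h3, h4] with y h1 h2 h3 h4
  have h2' : pd n a (∑ i, w i • ((fun y => y i) * pd n i f)) y =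
      ∑ i, w i * (pd n a ((fun y => y i) * pd n i f) y) := by
    refine h2.trans ?_
    simp [iterPd, pd_const_smul]
  change pd n a (c • pd n e f + ∑ i, w i • ((fun y => y i) * pd n i f)) y = _
  rw [h1, Pi.add_apply, h2', pd_const_smul]
  simp only [h3, eulerOp, Pi.add_apply, Pi.smul_apply, Pi.mul_apply, Finset.sum_apply, h4,
    pd_coord, smul_eq_mul, mul_add, Finset.sum_add_distrib]
  simp
  ring

lemma iterPd_eulerOp (c : ℂ) (e : Fin (n + 2)) (w : Fin (n + 2) → ℂ) (L : List (Fin (n + 2)))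
    (hf : AnalyticAt ℂ f x) :
    iterPd n L (eulerOp n c e w f) =ᶠ[nhds x]
      eulerOp n c e w (iterPd n L f) + (L.map w).sum • iterPd n L f := by
  induction L generalizing f with
  | nil => simp [iterPd]
  | cons a L ih =>
    have h1 := iterPd_congr L (pd_eulerOp c e w a hf)
    have h2 := iterPd_add L ((hf.pd a).eulerOp c e w) ((hf.pd a).const_smul (c := w a))
    filter_upwards [h1, h2, ih (hf.pd a)] with y h1 h2 h3
    change iterPd n L (pd n a (eulerOp n c e w f)) y = _
    rw [h1, h2, Pi.add_apply, h3, iterPd_const_smul]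
    simp [iterPd]
    ring

lemma pd_eval_mvPolynomial (a : Fin (n + 2)) (p : MvPolynomial (Fin (n + 2)) ℂ) :
    pd n a (fun y => MvPolynomial.eval y p) =
      fun y => MvPolynomial.eval y (MvPolynomial.pderiv a p) := by
  have hA : ∀ (p : MvPolynomial (Fin (n + 2)) ℂ) y,
      AnalyticAt ℂ (fun y => MvPolynomial.eval y p) y := fun p y =>
    AnalyticAt.aeval_mvPolynomial (f := fun y : Fin (n + 2) → ℂ => y) (fun i =>
      (ContinuousLinearMap.proj (R := ℂ) (φ := fun _ : Fin (n + 2) => ℂ) i).analyticAt y) p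
  funext y
  induction p using MvPolynomial.induction_on with
  | C c => simp [pd_const]
  | add p q hp hq =>
    have := (pd_add a (hA p y) (hA q y)).self_of_nhds
    simp only [Pi.add_apply, hp, hq] at this
    simpa [Pi.add_def] using this
  | mul_X p i hp =>
    have := (pd_mul a (hA p y) (hA (MvPolynomial.X i) y)).self_of_nhds
    simp only [Pi.add_apply, Pi.mul_apply, hp, MvPolynomial.eval_X, pd_coord] at this
    have e : (fun y => MvPolynomial.eval y (p * MvPolynomial.X i)) =
        (fun y => MvPolynomial.eval y p) * fun y => y i := by
      funext y; simp
    rw [e, this, MvPolynomial.pderiv_mul, MvPolynomial.pderiv_X]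
    by_cases hai : a = i
    · simp [hai]
    · simp [hai, Ne.symm hai]

lemma pderiv_three_eq_zero {σ R : Type*} [CommSemiring R] {p : MvPolynomial σ R}
    (hp : p.totalDegree ≤ 2) (a b c : σ) :
    MvPolynomial.pderiv c (MvPolynomial.pderiv b (MvPolynomial.pderiv a p)) = 0 := by
  classical
  rw [p.as_sum]
  simp only [map_sum]
  refine Finset.sum_eq_zero fun m hm => ?_
  have hm2 : m.degree ≤ 2 := by
    refine le_trans ?_ hp
    exact MvPolynomial.le_totalDegree hm
  simp only [MvPolynomial.pderiv_monomial]
  rw [MvPolynomial.monomial_eq_zero]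
  by_contra hne
  have ha : m a ≠ 0 := fun h => hne (by simp [h])
  have hb : (m - Finsupp.single a 1 : σ →₀ ℕ) b ≠ 0 := fun h => hne (by rw [h]; simp)
  have hc : (m - Finsupp.single a 1 - Finsupp.single b 1 : σ →₀ ℕ) c ≠ 0 := fun h =>
    hne (by rw [h]; simp)
  have key : ∀ (q : σ →₀ ℕ) i, q i ≠ 0 → q.degree = (q - Finsupp.single i 1).degree + 1 := by
    intro q i hq
    have : q = (q - Finsupp.single i 1) + Finsupp.single i 1 := by
      rw [tsub_add_cancel_of_le]
      exact Finsupp.single_le_iff.2 (Nat.one_le_iff_ne_zero.2 hq)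
    conv_lhs => rw [this]
    simp
  have := key _ _ ha
  have := key _ _ hb
  have := key _ _ hc
  omega

lemma iterPd_eval_mvPolynomial_eq_zero {p : MvPolynomial (Fin (n + 2)) ℂ}
    (hp : p.totalDegree ≤ 2) {L : List (Fin (n + 2))} (hL : 3 ≤ L.length) :
    iterPd n L (fun y => MvPolynomial.eval y p) = 0 := by
  match L, hL with
  | a :: b :: c :: L, _ =>
    simp only [iterPd, pd_eval_mvPolynomial, pderiv_three_eq_zero hp, map_zero]
    exact iterPd_zero L

/-- The weights of the linear part of the Euler field of the quadric. -/
noncomputable def eulerWeight (n : ℕ) (i : Fin (n + 2)) : ℂ :=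
  if (i : ℕ) ≤ n then 1 - ((i : ℕ) : ℂ) else 1 - (n : ℂ) / 2

lemma euler_recursion {p : MvPolynomial (Fin (n + 2)) ℂ} (hp : p.totalDegree ≤ 2)
    (hf : AnalyticAt ℂ f 0)
    (hE : ∀ᶠ y in nhds (0 : Fin (n + 2) → ℂ),
      (n : ℂ) * pd n (1 : Fin (n + 2)) f y
          + (∑ i : Fin (n + 1),
              (1 - ((i : ℕ) : ℂ)) * y i.castSucc * pd n i.castSucc f y)
          + (1 - (n : ℂ) / 2) * y (Fin.last (n + 1)) * pd n (Fin.last (n + 1)) f y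
          - (3 - (n : ℂ)) * f y
        = MvPolynomial.eval y p)
    {L : List (Fin (n + 2))} (hL : 3 ≤ L.length) :
    (n : ℂ) * iterPd n (1 :: L) f 0 =
      (3 - (n : ℂ) - (L.map (eulerWeight n)).sum) * iterPd n L f 0 := by
  have h1 : eulerOp n n 1 (eulerWeight n) f + (-(3 - (n : ℂ))) • f =ᶠ[nhds 0]
      fun y => MvPolynomial.eval y p := by
    filter_upwards [hE] with y hy
    rw [← hy]
    simp only [eulerOp, Pi.add_apply, Pi.smul_apply, Pi.mul_apply, Finset.sum_apply, smul_eq_mul]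
    rw [Fin.sum_univ_castSucc]
    have : ∀ i : Fin (n + 1), eulerWeight n i.castSucc = 1 - ((i : ℕ) : ℂ) := fun i => by
      simp [eulerWeight, Nat.lt_succ_iff.1 i.2]
    simp only [this]
    have : eulerWeight n (Fin.last (n + 1)) = 1 - (n : ℂ) / 2 := by simp [eulerWeight]
    rw [this]
    simp only [mul_assoc]
    ring
  have h2 := (iterPd_congr L h1).self_of_nhds
  rw [iterPd_eval_mvPolynomial_eq_zero hp hL,
    (iterPd_add L (hf.eulerOp n 1 (eulerWeight n)) hf.const_smul).self_of_nhds, Pi.add_apply,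
    (iterPd_eulerOp n 1 (eulerWeight n) L hf).self_of_nhds, iterPd_const_smul] at h2
  have h3 : pd n 1 (iterPd n L f) 0 = iterPd n (1 :: L) f 0 := by
    have := (iterPd_perm (L := L ++ [1]) (L' := 1 :: L) (by simp) hf).self_of_nhds
    rwa [iterPd_append] at this
  simp only [eulerOp, Pi.add_apply, Pi.smul_apply, Pi.mul_apply, Finset.sum_apply, smul_eq_mul,
    Pi.zero_apply, h3] at h2
  simp only [zero_mul, mul_zero, Finset.sum_const_zero] at h2
  linear_combination h2

end EulerField

section Correlators

variable {n : ℕ}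

lemma multiset_triple_eq_iff {a b c d e f : ℕ} :
    ({a, b, c} : Multiset ℕ) = {d, e, f} ↔
      (a = d ∧ b = e ∧ c = f) ∨ (a = d ∧ b = f ∧ c = e) ∨ (a = e ∧ b = d ∧ c = f) ∨
      (a = e ∧ b = f ∧ c = d) ∨ (a = f ∧ b = d ∧ c = e) ∨ (a = f ∧ b = e ∧ c = d) := by
  constructor
  · intro h
    have ha : a ∈ ({d, e, f} : Multiset ℕ) := by rw [← h]; simp
    simp only [Multiset.insert_eq_cons, Multiset.mem_cons, Multiset.mem_singleton] at ha
    have key : ∀ {b c e f : ℕ}, ({b, c} : Multiset ℕ) = {e, f} →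
        (b = e ∧ c = f) ∨ (b = f ∧ c = e) := by
      intro b c e f h
      have hb : b ∈ ({e, f} : Multiset ℕ) := by rw [← h]; simp
      simp only [Multiset.insert_eq_cons, Multiset.mem_cons, Multiset.mem_singleton] at hb
      rcases hb with rfl | rfl
      · simp [Multiset.insert_eq_cons] at h
        exact Or.inl ⟨rfl, h⟩
      · rw [Multiset.pair_comm e b] at h
        simp [Multiset.insert_eq_cons] at h
        exact Or.inr ⟨rfl, h⟩
    rcases ha with rfl | rfl | rfl
    · have := key ((Multiset.cons_inj_right a).1 h)
      tauto
    · have h' : a ::ₘ ({b, c} : Multiset ℕ) = a ::ₘ {d, f} := by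
        rw [show a ::ₘ ({d, f} : Multiset ℕ) = d ::ₘ {a, f} from Multiset.cons_swap _ _ _]
        exact h
      have := key ((Multiset.cons_inj_right a).1 h')
      tauto
    · have h' : a ::ₘ ({b, c} : Multiset ℕ) = a ::ₘ {d, e} := by
        rw [show a ::ₘ ({d, e} : Multiset ℕ) = d ::ₘ {e, a} from by
          rw [Multiset.pair_comm e a]; exact Multiset.cons_swap _ _ _]
        exact h
      have := key ((Multiset.cons_inj_right a).1 h')
      tauto
  · have hsw : ∀ x y z : ℕ, ({x, y, z} : Multiset ℕ) = {y, x, z} := fun x y z =>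
      Multiset.cons_swap _ _ _
    have hrt : ∀ x y z : ℕ, ({x, y, z} : Multiset ℕ) = {x, z, y} := fun x y z =>
      congrArg _ (Multiset.pair_comm y z)
    rintro (⟨rfl, rfl, rfl⟩ | ⟨rfl, rfl, rfl⟩ | ⟨rfl, rfl, rfl⟩ | ⟨rfl, rfl, rfl⟩ |
      ⟨rfl, rfl, rfl⟩ | ⟨rfl, rfl, rfl⟩)
    · rfl
    · exact hrt _ _ _
    · exact hsw _ _ _
    · rw [hrt, hsw]
    · rw [hsw, hrt]
    · rw [hsw, hrt, hsw]

lemma exists_multiset_triple_iff {a b c : ℕ} :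
    (∃ i : ℕ, 1 ≤ i ∧ i ≤ n - 1 ∧ ({a, b, c} : Multiset ℕ) = {i, n - i, n}) ↔
      (a = n ∧ b + c = n ∧ 1 ≤ b ∧ 1 ≤ c) ∨ (b = n ∧ a + c = n ∧ 1 ≤ a ∧ 1 ≤ c) ∨
        (c = n ∧ a + b = n ∧ 1 ≤ a ∧ 1 ≤ b) := by
  simp only [multiset_triple_eq_iff]
  constructor
  · rintro ⟨i, h1, h2, h3⟩
    omega
  · rintro (h | h | h)
    · exact ⟨b, by omega⟩
    · exact ⟨a, by omega⟩
    · exact ⟨a, by omega⟩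

/-- The index dual to `i` under the flat metric. -/
def dualIdx (n : ℕ) (i : Fin (n + 2)) : Fin (n + 2) :=
  if h : (i : ℕ) ≤ n then ⟨n - i, by omega⟩ else i

lemma dualIdx_val (i : Fin (n + 2)) :
    ((dualIdx n i : Fin (n + 2)) : ℕ) = if (i : ℕ) ≤ n then n - (i : ℕ) else (i : ℕ) := by
  unfold dualIdx
  split_ifs <;> rfl

lemma ginv_eq (i j : Fin (n + 2)) : ginv n i j = if j = dualIdx n i then 1 / 2 else 0 := by
  unfold ginv
  refine if_congr ?_ rfl rfl
  rw [Fin.ext_iff, dualIdx_val]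
  have := i.2
  have := j.2
  split_ifs <;> omega

lemma sum_ginv_mul (G : Fin (n + 2) → Fin (n + 2) → ℂ) :
    ∑ i, ∑ j, ginv n i j * G i j = ∑ i, 1 / 2 * G i (dualIdx n i) := by
  simp [ginv_eq]

lemma corr3_one_mid (hn : 4 ≤ n) (j d : Fin (n + 2)) (hd : 1 ≤ (d : ℕ)) (hd' : (d : ℕ) < n) :
    corr3 n j 1 d = if (j : ℕ) + 1 + d = n then 2 else
      if (d : ℕ) + 1 = n ∧ (j : ℕ) = n then 4 else 0 := by
  unfold corr3
  simp only [exists_multiset_triple_iff]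
  simp only [multiset_triple_eq_iff, Fin.val_one]
  have := j.2
  by_cases h1 : (j : ℕ) + 1 + d = n
  · rw [if_pos h1]
    rw [if_neg (by omega), if_neg (by omega), if_pos (by omega)]
  by_cases h2 : (d : ℕ) + 1 = n ∧ (j : ℕ) = n
  · rw [if_neg h1, if_pos h2]
    rw [if_neg (by omega), if_neg (by omega), if_neg (by omega), if_pos (by omega)]
  · rw [if_neg h1, if_neg h2]
    iterate 6 rw [if_neg (by omega)]

lemma corr3_one_last (hn : 4 ≤ n) (j : Fin (n + 2)) : corr3 n j 1 (Fin.last (n + 1)) = 0 := by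
  unfold corr3
  simp only [exists_multiset_triple_iff]
  simp only [multiset_triple_eq_iff, Fin.val_one, Fin.val_last]
  have := j.2
  iterate 6 rw [if_neg (by omega)]

lemma corr3_top_last (hn : 4 ≤ n) (a i : Fin (n + 2)) (ha : (a : ℕ) = n) :
    corr3 n a (Fin.last (n + 1)) i = if i = Fin.last (n + 1) then -4 else 0 := by
  unfold corr3
  simp only [exists_multiset_triple_iff]
  simp only [multiset_triple_eq_iff, Fin.ext_iff, Fin.val_last]
  have := i.2
  by_cases h1 : (i : ℕ) = n + 1
  · rw [if_pos h1]
    rw [if_neg (by omega), if_pos (by simp [ha, h1])]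
  · rw [if_neg h1]
    iterate 6 rw [if_neg (by omega)]

lemma corr3_last_top_last (hn : 4 ≤ n) (a : Fin (n + 2)) (ha : (a : ℕ) = n) :
    corr3 n (Fin.last (n + 1)) a (Fin.last (n + 1)) = -4 := by
  unfold corr3
  simp only [exists_multiset_triple_iff]
  simp only [multiset_triple_eq_iff, Fin.val_last]
  rw [if_neg (by omega), if_pos (by simp [ha])]

lemma corr3_top_one (hn : 4 ≤ n) (a i : Fin (n + 2)) (ha : (a : ℕ) = n) :
    corr3 n a 1 i = if (i : ℕ) + 1 = n then 4 else 0 := by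
  unfold corr3
  simp only [exists_multiset_triple_iff]
  simp only [multiset_triple_eq_iff, Fin.val_one]
  have := i.2
  by_cases h1 : (i : ℕ) + 1 = n
  · rw [if_pos h1]
    rw [if_neg (by omega), if_neg (by omega), if_neg (by omega), if_pos (by omega)]
  · rw [if_neg h1]
    iterate 6 rw [if_neg (by omega)]

end Correlators

section Reconstruction

variable {n : ℕ} {U : Set (Fin (n + 2) → ℂ)} {F F' : (Fin (n + 2) → ℂ) → ℂ}

lemma wdvv_sub (hU : U ∈ nhds (0 : Fin (n + 2) → ℂ)) (hF : IsQuadricFrobeniusPotential n U F)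
    (hF' : IsQuadricFrobeniusPotential n U F') (a b c d : Fin (n + 2)) :
    (∑ i, ∑ j, ginv n i j • (iterPd n [i, b, a] (F - F') * iterPd n [d, c, j] F +
        iterPd n [i, b, a] F' * iterPd n [d, c, j] (F - F'))) =ᶠ[nhds 0]
      ∑ i, ∑ j, ginv n i j • (iterPd n [i, c, a] (F - F') * iterPd n [d, b, j] F +
        iterPd n [i, c, a] F' * iterPd n [d, b, j] (F - F')) := by
  have hA := hF.1 0 (mem_of_mem_nhds hU)
  have hA' := hF'.1 0 (mem_of_mem_nhds hU)
  have hs : ∀ᶠ y in nhds (0 : Fin (n + 2) → ℂ), ∀ i j k,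
      iterPd n [i, j, k] (F - F') y = iterPd n [i, j, k] F y - iterPd n [i, j, k] F' y :=
    Filter.eventually_all.2 fun i => Filter.eventually_all.2 fun j =>
      Filter.eventually_all.2 fun k => iterPd_sub [i, j, k] hA hA'
  filter_upwards [hU, hs] with y hy hs
  have hW := hF.2.2.2.2.2.1 a b c d y hy
  have hW' := hF'.2.2.2.2.2.1 a b c d y hy
  have key : ∀ b c, ∑ i, ∑ j, ginv n i j * (iterPd n [i, b, a] (F - F') y *
        iterPd n [d, c, j] F y + iterPd n [i, b, a] F' y * iterPd n [d, c, j] (F - F') y) =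
      (∑ i, ∑ j, pd n a (pd n b (pd n i F)) y * ginv n i j * pd n j (pd n c (pd n d F)) y) -
      ∑ i, ∑ j, pd n a (pd n b (pd n i F')) y * ginv n i j * pd n j (pd n c (pd n d F')) y := by
    intro b c
    simp only [← Finset.sum_sub_distrib]
    refine Finset.sum_congr rfl fun i _ => Finset.sum_congr rfl fun j _ => ?_
    rw [hs, hs]
    simp only [iterPd]
    ring
  simp only [Finset.sum_apply, Pi.smul_apply, Pi.add_apply, Pi.mul_apply, smul_eq_mul]
  rw [key, key, hW, hW']

lemma analyticAt_wdvv_term (hA : AnalyticAt ℂ F 0) (hA' : AnalyticAt ℂ F' 0)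
    (a b c d i j : Fin (n + 2)) :
    AnalyticAt ℂ (iterPd n [i, b, a] (F - F') * iterPd n [d, c, j] F +
        iterPd n [i, b, a] F' * iterPd n [d, c, j] (F - F')) 0 :=
  (((hA.sub hA').iterPd _).mul (hA.iterPd _)).add ((hA'.iterPd _).mul ((hA.sub hA').iterPd _))

lemma iterPd_wdvv_sub (hU : U ∈ nhds (0 : Fin (n + 2) → ℂ))
    (hF : IsQuadricFrobeniusPotential n U F) (hF' : IsQuadricFrobeniusPotential n U F')
    (S : List (Fin (n + 2))) (a b c d : Fin (n + 2)) :
    ∑ i, 1 / 2 * (iterPd n S (iterPd n [i, b, a] (F - F') * iterPd n [d, c, dualIdx n i] F) 0 +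
        iterPd n S (iterPd n [i, b, a] F' * iterPd n [d, c, dualIdx n i] (F - F')) 0) =
      ∑ i, 1 / 2 * (iterPd n S (iterPd n [i, c, a] (F - F') * iterPd n [d, b, dualIdx n i] F) 0 +
        iterPd n S (iterPd n [i, c, a] F' * iterPd n [d, b, dualIdx n i] (F - F')) 0) := by
  have hA := hF.1 0 (mem_of_mem_nhds hU)
  have hA' := hF'.1 0 (mem_of_mem_nhds hU)
  have h := (iterPd_congr S (wdvv_sub hU hF hF' a b c d)).self_of_nhds
  have key : ∀ b c, iterPd n S (∑ i, ∑ j, ginv n i j • (iterPd n [i, b, a] (F - F') *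
        iterPd n [d, c, j] F + iterPd n [i, b, a] F' * iterPd n [d, c, j] (F - F'))) 0 =
      ∑ i, 1 / 2 * (iterPd n S (iterPd n [i, b, a] (F - F') * iterPd n [d, c, dualIdx n i] F) 0 +
        iterPd n S (iterPd n [i, b, a] F' * iterPd n [d, c, dualIdx n i] (F - F')) 0) := by
    intro b c
    rw [← sum_ginv_mul fun i j =>
      iterPd n S (iterPd n [i, b, a] (F - F') * iterPd n [d, c, j] F) 0 +
        iterPd n S (iterPd n [i, b, a] F' * iterPd n [d, c, j] (F - F')) 0]
    have hT := analyticAt_wdvv_term hA hA' a b c d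
    rw [(iterPd_sum _ S fun i => Finset.univ.analyticAt_sum fun j _ =>
      (hT i j).const_smul).self_of_nhds, Finset.sum_apply]
    refine Finset.sum_congr rfl fun i _ => ?_
    rw [(iterPd_sum _ S fun j => (hT i j).const_smul).self_of_nhds, Finset.sum_apply]
    refine Finset.sum_congr rfl fun j _ => ?_
    rw [iterPd_const_smul, Pi.smul_apply, smul_eq_mul,
      (iterPd_add S (((hA.sub hA').iterPd _).mul (hA.iterPd _))
        ((hA'.iterPd _).mul ((hA.sub hA').iterPd _))).self_of_nhds, Pi.add_apply]
  rw [← key, ← key]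
  exact h

lemma iterPd_mul_iterPd_of_order {D G : (Fin (n + 2) → ℂ) → ℂ} {M : ℕ}
    (hD : AnalyticAt ℂ D 0) (hG : AnalyticAt ℂ G 0)
    (hvan : ∀ L : List (Fin (n + 2)), L.length < M → iterPd n L D 0 = 0)
    {S : List (Fin (n + 2))} (hS : S.length + 3 = M) (i j k : Fin (n + 2)) :
    iterPd n S (iterPd n [i, j, k] D * G) 0 = iterPd n (i :: j :: k :: S) D 0 * G 0 :=
  iterPd_mul_of_order S (hD.iterPd _) hG fun L hL =>
    hvan (i :: j :: k :: L) (by simp only [List.length_cons]; omega)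

lemma iterPd_replicate_mul_iterPd_of_order {D G : (Fin (n + 2) → ℂ) → ℂ} {k : ℕ}
    (hD : AnalyticAt ℂ D 0) (hG : AnalyticAt ℂ G 0)
    (hvan : ∀ L : List (Fin (n + 2)), L.length < k + 3 → iterPd n L D 0 = 0)
    (z a b c : Fin (n + 2)) :
    iterPd n (List.replicate (k + 1) z) (iterPd n [a, b, c] D * G) 0 =
      iterPd n (a :: b :: c :: List.replicate (k + 1) z) D 0 * G 0 +
        (k + 1) * iterPd n (a :: b :: c :: List.replicate k z) D 0 * pd n z G 0 :=
  iterPd_replicate_mul_of_order z k (hD.iterPd _) hG fun L hL =>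
    hvan (a :: b :: c :: L) (by simp only [List.length_cons]; omega)

lemma IsQuadricFrobeniusPotential.euler (hU : U ∈ nhds (0 : Fin (n + 2) → ℂ))
    (hF : IsQuadricFrobeniusPotential n U F) {L : List (Fin (n + 2))} (hL : 3 ≤ L.length) :
    (n : ℂ) * iterPd n (1 :: L) F 0 =
      (3 - (n : ℂ) - (L.map (eulerWeight n)).sum) * iterPd n L F 0 := by
  obtain ⟨p, hp, hE⟩ := hF.2.2.2.2.2.2.1
  exact euler_recursion hp (hF.1 0 (mem_of_mem_nhds hU)) (Filter.mem_of_superset hU hE) hL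

lemma euler_sub (hU : U ∈ nhds (0 : Fin (n + 2) → ℂ))
    (hF : IsQuadricFrobeniusPotential n U F) (hF' : IsQuadricFrobeniusPotential n U F')
    {L : List (Fin (n + 2))} (hL : 3 ≤ L.length) :
    (n : ℂ) * iterPd n (1 :: L) (F - F') 0 =
      (3 - (n : ℂ) - (L.map (eulerWeight n)).sum) * iterPd n L (F - F') 0 := by
  have hA := hF.1 0 (mem_of_mem_nhds hU)
  have hA' := hF'.1 0 (mem_of_mem_nhds hU)
  rw [(iterPd_sub (1 :: L) hA hA').self_of_nhds, (iterPd_sub L hA hA').self_of_nhds,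
    Pi.sub_apply, Pi.sub_apply]
  linear_combination hF.euler hU hL - hF'.euler hU hL

lemma iterPd_sub_zero_cons (hU : U ∈ nhds (0 : Fin (n + 2) → ℂ))
    (hF : IsQuadricFrobeniusPotential n U F) (hF' : IsQuadricFrobeniusPotential n U F')
    {L : List (Fin (n + 2))} (hL : 2 ≤ L.length) : iterPd n (0 :: L) (F - F') 0 = 0 := by
  have hA := hF.1 0 (mem_of_mem_nhds hU)
  have hA' := hF'.1 0 (mem_of_mem_nhds hU)
  match L, hL with
  | b :: a :: L, _ =>
    have hp : (0 :: b :: a :: L).Perm (b :: a :: 0 :: L) :=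
      (List.Perm.swap b 0 _).trans ((List.Perm.swap a 0 L).cons b)
    rw [(iterPd_perm hp (hA.sub hA')).self_of_nhds]
    have h0 : iterPd n [b, a, 0] (F - F') =ᶠ[nhds 0] 0 := by
      filter_upwards [hU, iterPd_sub [b, a, 0] hA hA'] with y hy hs
      rw [hs]
      have h1 := hF.2.2.2.2.1 a b y hy
      have h2 := hF'.2.2.2.2.1 a b y hy
      simp [iterPd, h1, h2]
    have := (iterPd_congr L h0).self_of_nhds
    rwa [iterPd_zero] at this

/-- If two potentials agree to order below `M`, with `M ≥ 4`, then the `M`-th derivatives of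
their difference involving a direction other than `∂_{n+1}` vanish. -/
lemma iterPd_sub_eq_zero_of_mem (hn : 4 ≤ n) (hU : U ∈ nhds (0 : Fin (n + 2) → ℂ))
    (hF : IsQuadricFrobeniusPotential n U F) (hF' : IsQuadricFrobeniusPotential n U F')
    {M : ℕ} (hM : 4 ≤ M)
    (hvan : ∀ L : List (Fin (n + 2)), L.length < M → iterPd n L (F - F') 0 = 0)
    {L : List (Fin (n + 2))} (hL : L.length = M) {e : Fin (n + 2)} (he : (e : ℕ) ≤ n)
    (heL : e ∈ L) : iterPd n L (F - F') 0 = 0 := by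
  have hA := hF.1 0 (mem_of_mem_nhds hU)
  have hA' := hF'.1 0 (mem_of_mem_nhds hU)
  have hn0 : (n : ℂ) ≠ 0 := by
    rw [Nat.cast_ne_zero]; omega
  have hmem : ∀ e : Fin (n + 2), (∀ L : List (Fin (n + 2)), L.length + 1 = M →
      iterPd n (e :: L) (F - F') 0 = 0) → ∀ L : List (Fin (n + 2)), L.length = M → e ∈ L →
      iterPd n L (F - F') 0 = 0 := by
    intro e h L hL he
    rw [(iterPd_perm (List.perm_cons_erase he) (hA.sub hA')).self_of_nhds]
    refine h _ ?_
    have := List.length_erase_add_one he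
    omega
  have hzero : ∀ L : List (Fin (n + 2)), L.length + 1 = M →
      iterPd n (0 :: L) (F - F') 0 = 0 := fun L hL =>
    iterPd_sub_zero_cons hU hF hF' (by omega)
  have hone : ∀ L : List (Fin (n + 2)), L.length + 1 = M →
      iterPd n (1 :: L) (F - F') 0 = 0 := by
    intro L hL
    have h := euler_sub hU hF hF' (L := L) (by omega)
    rw [hvan L (by omega), mul_zero] at h
    exact (mul_eq_zero.1 h).resolve_left hn0
  suffices H : ∀ k : ℕ, ∀ e : Fin (n + 2), (e : ℕ) = k → k ≤ n → ∀ L : List (Fin (n + 2)),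
      L.length + 1 = M → iterPd n (e :: L) (F - F') 0 = 0 from
    hmem e (H e e rfl he) L hL heL
  intro k
  induction k with
  | zero =>
    intro e he _
    obtain rfl : e = 0 := Fin.ext (by simpa using he)
    exact hzero
  | succ k ih =>
    intro e he hk L hL
    rcases Nat.eq_zero_or_pos k with rfl | hk0
    · obtain rfl : e = 1 := Fin.ext (by simpa using he)
      exact hone L hL
    · match L, hL with
      | [], hL => simp only [List.length_nil] at hL; omega
      | [_], hL => simp only [List.length_cons, List.length_nil] at hL; omega
      | b :: a :: S, hL =>
        simp only [List.length_cons] at hL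
        let d : Fin (n + 2) := ⟨k, by omega⟩
        have hd : (d : ℕ) = k := rfl
        have hdz := hmem d (ih d rfl (by omega))
        have h1z := hmem 1 hone
        have hW := iterPd_wdvv_sub hU hF hF' S a b 1 d
        have e1 : ∀ (i j k : Fin (n + 2)) (G : (Fin (n + 2) → ℂ) → ℂ), AnalyticAt ℂ G 0 →
            iterPd n S (iterPd n [i, j, k] (F - F') * G) 0 =
              iterPd n (i :: j :: k :: S) (F - F') 0 * G 0 := fun i j k G hG =>
          iterPd_mul_iterPd_of_order (hA.sub hA') hG hvan (by omega) i j k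
        have e2 : ∀ (i j k : Fin (n + 2)) (G : (Fin (n + 2) → ℂ) → ℂ), AnalyticAt ℂ G 0 →
            iterPd n S (G * iterPd n [i, j, k] (F - F')) 0 =
              iterPd n (i :: j :: k :: S) (F - F') 0 * G 0 := fun i j k G hG => by
          rw [mul_comm G, e1 i j k G hG]
        have z1 : ∀ i, iterPd n (d :: 1 :: i :: S) (F - F') 0 = 0 := fun i =>
          h1z _ (by simp only [List.length_cons]; omega) (by simp)
        have z2 : ∀ i, iterPd n (i :: 1 :: a :: S) (F - F') 0 = 0 := fun i =>
          h1z _ (by simp only [List.length_cons]; omega) (by simp)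
        have z3 : ∀ i, iterPd n (d :: b :: i :: S) (F - F') 0 = 0 := fun i =>
          hdz _ (by simp only [List.length_cons]; omega) (by simp)
        simp only [e1 _ _ _ _ (hA.iterPd _), e2 _ _ _ _ (hA'.iterPd _), z1, z2, z3, zero_mul,
          add_zero, mul_zero, Finset.sum_const_zero] at hW
        rw [Finset.sum_eq_single e] at hW
        · have hc : iterPd n [d, 1, dualIdx n e] F 0 = 2 := by
            refine (hF.2.2.2.2.2.2.2 (dualIdx n e) 1 d).trans ?_
            rw [corr3_one_mid hn _ _ (by omega) (by omega), if_pos]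
            rw [dualIdx_val, if_pos (by omega)]
            omega
          rw [hc] at hW
          linear_combination hW
        · intro i _ hie
          have hie' : (i : ℕ) ≠ e := fun h => hie (Fin.ext h)
          have hi := i.2
          have hc : iterPd n [d, 1, dualIdx n i] F 0 = _ := hF.2.2.2.2.2.2.2 (dualIdx n i) 1 d
          rw [corr3_one_mid hn _ _ (by omega) (by omega), dualIdx_val] at hc
          by_cases hi0 : (i : ℕ) = 0
          · obtain rfl : i = 0 := Fin.ext (by simpa using hi0)
            rw [hzero _ (by simp only [List.length_cons]; omega)]
            simp
          · rw [if_neg (by split_ifs <;> omega), if_neg (by split_ifs <;> omega)] at hc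
            rw [hc]
            simp
        · simp

lemma iterPd_sub_replicate_last_eq_zero (hn : 4 ≤ n) (hU : U ∈ nhds (0 : Fin (n + 2) → ℂ))
    (hF : IsQuadricFrobeniusPotential n U F) (hF' : IsQuadricFrobeniusPotential n U F')
    {k : ℕ} (hk : 1 ≤ k)
    (hvan : ∀ L : List (Fin (n + 2)), L.length < k + 3 → iterPd n L (F - F') 0 = 0) :
    iterPd n (List.replicate (k + 3) (Fin.last (n + 1))) (F - F') 0 = 0 := by
  have hA := hF.1 0 (mem_of_mem_nhds hU)
  have hA' := hF'.1 0 (mem_of_mem_nhds hU)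
  have hn0 : (n : ℂ) ≠ 0 := by
    rw [Nat.cast_ne_zero]; omega
  have hmem : ∀ {L : List (Fin (n + 2))} {e : Fin (n + 2)}, L.length = k + 3 → (e : ℕ) ≤ n →
      e ∈ L → iterPd n L (F - F') 0 = 0 := fun hL he heL =>
    iterPd_sub_eq_zero_of_mem hn hU hF hF' (by omega) hvan hL he heL
  obtain ⟨z, hz⟩ : ∃ z : Fin (n + 2), z = Fin.last (n + 1) := ⟨_, rfl⟩
  have hzv : (z : ℕ) = n + 1 := by simp [hz]
  obtain ⟨t, ht⟩ : ∃ t : Fin (n + 2), (t : ℕ) = n := ⟨⟨n, by omega⟩, rfl⟩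
  have h1v : ((1 : Fin (n + 2)) : ℕ) ≤ n := by simp; omega
  rw [← hz]
  have hwz : eulerWeight n z = 1 - (n : ℂ) / 2 := by simp [eulerWeight, hzv]
  have hwt : eulerWeight n t = 1 - (n : ℂ) := by simp [eulerWeight, ht]
  have hdz : dualIdx n z = z := Fin.ext (by rw [dualIdx_val, if_neg (by omega)])
  have hdual : ∀ i, dualIdx n i = z ↔ i = z := by
    intro i
    have := i.2
    rw [Fin.ext_iff, Fin.ext_iff, dualIdx_val]
    split_ifs <;> omega
  set C := iterPd n (List.replicate (k + 3) z) (F - F') 0 with hC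
  set E := iterPd n (1 :: List.replicate (k + 3) z) (F - F') 0 with hE
  have hEC : (n : ℂ) * E = (3 - (n : ℂ) - (k + 3) * (1 - (n : ℂ) / 2)) * C := by
    have := euler_sub hU hF hF' (L := List.replicate (k + 3) z) (by simp)
    rw [List.map_replicate, List.sum_replicate, hwz, nsmul_eq_mul] at this
    push_cast at this
    exact this
  have h4 : pd n z (iterPd n [z, 1, t] F') 0 = -4 := by
    have h := hF'.euler hU (L := [z, t, z]) (by simp)
    have h3 : iterPd n [z, t, z] F' 0 = -4 := by
      refine (hF'.2.2.2.2.2.2.2 z t z).trans ?_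
      rw [hz, corr3_last_top_last hn t ht]
    have hp : (1 :: [z, t, z]).Perm [z, 1, t, z] := List.Perm.swap _ _ _
    rw [(iterPd_perm hp hA').self_of_nhds, h3] at h
    change (n : ℂ) * pd n z (iterPd n [z, 1, t] F') 0 = _ at h
    simp only [List.map_cons, List.map_nil, List.sum_cons, List.sum_nil, hwz, hwt] at h
    apply mul_left_cancel₀ hn0
    rw [h]
    ring
  have hW := iterPd_wdvv_sub hU hF hF' (List.replicate (k + 1) z) t z 1 z
  have e1 : ∀ (a b c : Fin (n + 2)) (G : (Fin (n + 2) → ℂ) → ℂ), AnalyticAt ℂ G 0 →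
      iterPd n (List.replicate (k + 1) z) (iterPd n [a, b, c] (F - F') * G) 0 =
        iterPd n (a :: b :: c :: List.replicate (k + 1) z) (F - F') 0 * G 0 +
        (k + 1) * iterPd n (a :: b :: c :: List.replicate k z) (F - F') 0 * pd n z G 0 :=
    fun a b c G hG => iterPd_replicate_mul_iterPd_of_order (hA.sub hA') hG hvan z a b c
  have e2 : ∀ (a b c : Fin (n + 2)) (G : (Fin (n + 2) → ℂ) → ℂ), AnalyticAt ℂ G 0 →
      iterPd n (List.replicate (k + 1) z) (G * iterPd n [a, b, c] (F - F')) 0 =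
        iterPd n (a :: b :: c :: List.replicate (k + 1) z) (F - F') 0 * G 0 +
        (k + 1) * iterPd n (a :: b :: c :: List.replicate k z) (F - F') 0 * pd n z G 0 :=
    fun a b c G hG => by rw [mul_comm G, e1 a b c G hG]
  have z1 : ∀ i, iterPd n (i :: z :: t :: List.replicate k z) (F - F') 0 = 0 := fun i =>
    hmem (e := t) (by simp) (by omega) (by simp)
  have z2 : ∀ i, iterPd n (z :: 1 :: i :: List.replicate k z) (F - F') 0 = 0 := fun i =>
    hmem (e := 1) (by simp) h1v (by simp)
  have z3 : ∀ i, iterPd n (i :: 1 :: t :: List.replicate k z) (F - F') 0 = 0 := fun i =>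
    hmem (e := 1) (by simp) h1v (by simp)
  have z4 : ∀ i, iterPd n (i :: 1 :: t :: List.replicate (k + 1) z) (F - F') 0 = 0 := by
    intro i
    rw [(iterPd_perm (List.Perm.swap 1 i _) (hA.sub hA')).self_of_nhds]
    have h := euler_sub hU hF hF' (L := i :: t :: List.replicate (k + 1) z) (by simp)
    have h0 : iterPd n (i :: t :: List.replicate (k + 1) z) (F - F') 0 = 0 :=
      hmem (e := t) (by simp) (by omega) (by simp)
    rw [h0, mul_zero] at h
    exact (mul_eq_zero.1 h).resolve_left hn0
  have c1 : ∀ i, iterPd n [z, 1, dualIdx n i] F 0 = 0 := fun i =>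
    (hF.2.2.2.2.2.2.2 (dualIdx n i) 1 z).trans (by rw [hz, corr3_one_last hn])
  have c2 : ∀ i, iterPd n [i, z, t] F' 0 = if i = z then -4 else 0 := fun i =>
    (hF'.2.2.2.2.2.2.2 t z i).trans (by rw [hz, corr3_top_last hn t i ht])
  have c3 : ∀ i, iterPd n [i, 1, t] F' 0 = if (i : ℕ) + 1 = n then 4 else 0 := fun i =>
    (hF'.2.2.2.2.2.2.2 t 1 i).trans (corr3_top_one hn t i ht)
  have z5 : ∀ i, i ≠ z → iterPd n (z :: z :: dualIdx n i :: List.replicate k z) (F - F') 0 = 0 := by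
    intro i hi
    refine hmem (e := dualIdx n i) (by simp) ?_ (by simp)
    have h1 := (hdual i).not.2 hi
    have h2 := (dualIdx n i).2
    rw [Fin.ext_iff] at h1
    omega
  simp only [e1 _ _ _ _ (hA.iterPd _), e2 _ _ _ _ (hA'.iterPd _), z1, z2, z3, z4, c1, c2, c3,
    zero_mul, add_zero, mul_zero, zero_add] at hW
  have hl : ∑ i, 1 / 2 * (iterPd n (z :: 1 :: dualIdx n i :: List.replicate (k + 1) z) (F - F') 0 *
      if i = z then (-4 : ℂ) else 0) = -2 * E := by
    rw [Finset.sum_eq_single z (fun i _ hi => by simp [hi]) (by simp), hdz, if_pos rfl,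
      (iterPd_perm (List.Perm.swap 1 z _) (hA.sub hA')).self_of_nhds]
    change 1 / 2 * (E * -4) = _
    ring
  have hr1 : ∑ i : Fin (n + 2), 1 / 2 *
      (iterPd n (z :: z :: dualIdx n i :: List.replicate (k + 1) z) (F - F') 0 *
        if (i : ℕ) + 1 = n then (4 : ℂ) else 0) = 2 * E := by
    obtain ⟨s, hs⟩ : ∃ s : Fin (n + 2), (s : ℕ) + 1 = n := ⟨⟨n - 1, by omega⟩, by simp; omega⟩
    have hds : dualIdx n s = 1 := by
      refine Fin.ext ?_
      rw [dualIdx_val, if_pos (by omega), Fin.val_one]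
      omega
    rw [Finset.sum_eq_single s (fun i _ hi => ?_) (by simp), hds, if_pos hs]
    · have hp : (z :: z :: 1 :: List.replicate (k + 1) z).Perm
          (1 :: z :: z :: List.replicate (k + 1) z) :=
        ((List.Perm.swap 1 z _).cons z).trans (List.Perm.swap 1 z _)
      rw [(iterPd_perm hp (hA.sub hA')).self_of_nhds]
      change 1 / 2 * (E * 4) = _
      ring
    · rw [if_neg fun h => hi (Fin.ext (by omega))]
      simp
  have hr2 : ∑ i, 1 / 2 * ((k + 1) *
      iterPd n (z :: z :: dualIdx n i :: List.replicate k z) (F - F') 0 *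
        pd n z (iterPd n [i, 1, t] F') 0) = -2 * (k + 1) * C := by
    rw [Finset.sum_eq_single z (fun i _ hi => by rw [z5 i hi]; simp) (by simp), hdz, h4]
    change 1 / 2 * ((k + 1) * C * -4) = _
    ring
  simp only [mul_add, Finset.sum_add_distrib] at hW hr2
  rw [hl, hr1, hr2] at hW
  have hkC : (k : ℂ) * C = 0 := by
    linear_combination ((n : ℂ) / 4) * hW + hEC
  exact (mul_eq_zero.1 hkC).resolve_left (Nat.cast_ne_zero.2 (by omega))

lemma iterPd_sub_eq_zero (hn : 4 ≤ n) (hU : U ∈ nhds (0 : Fin (n + 2) → ℂ))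
    (hF : IsQuadricFrobeniusPotential n U F) (hF' : IsQuadricFrobeniusPotential n U F')
    (L : List (Fin (n + 2))) : iterPd n L (F - F') 0 = 0 := by
  have hA := hF.1 0 (mem_of_mem_nhds hU)
  have hA' := hF'.1 0 (mem_of_mem_nhds hU)
  have hthree : ∀ L : List (Fin (n + 2)), L.length < 4 → iterPd n L (F - F') 0 = 0 := by
    intro L hL
    rw [(iterPd_sub L hA hA').self_of_nhds, Pi.sub_apply, sub_eq_zero]
    match L, hL with
    | [], _ => exact hF.2.1.trans hF'.2.1.symm
    | [i], _ => exact (hF.2.2.1 i).trans (hF'.2.2.1 i).symm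
    | [j, i], _ => exact (hF.2.2.2.1 i j).trans (hF'.2.2.2.1 i j).symm
    | [k, j, i], _ =>
      exact (hF.2.2.2.2.2.2.2 i j k).trans (hF'.2.2.2.2.2.2.2 i j k).symm
    | _ :: _ :: _ :: _ :: L, hL => simp only [List.length_cons] at hL; omega
  suffices H : ∀ M : ℕ, ∀ L : List (Fin (n + 2)), L.length = M → iterPd n L (F - F') 0 = 0 from
    H _ L rfl
  intro M
  induction M using Nat.strong_induction_on with
  | _ M ih =>
    intro L hL
    rcases Nat.lt_or_ge M 4 with hM | hM
    · exact hthree L (by omega)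
    · have hvan : ∀ L : List (Fin (n + 2)), L.length < M → iterPd n L (F - F') 0 = 0 :=
        fun L hL => ih _ hL L rfl
      by_cases hex : ∃ e ∈ L, (e : ℕ) ≤ n
      · obtain ⟨e, heL, he⟩ := hex
        exact iterPd_sub_eq_zero_of_mem hn hU hF hF' hM hvan hL he heL
      · push Not at hex
        have hrep : L = List.replicate M (Fin.last (n + 1)) := by
          refine List.eq_replicate_iff.2 ⟨hL, fun e he => Fin.ext ?_⟩
          have := hex e he
          have := e.2
          rw [Fin.val_last]
          omega
        obtain ⟨k, rfl⟩ : ∃ k, M = k + 3 := ⟨M - 3, by omega⟩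
        rw [hrep]
        exact iterPd_sub_replicate_last_eq_zero hn hU hF hF' (by omega) hvan

end Reconstruction

/-- **Reconstruction/uniqueness of the mirror Frobenius potential of the quadric**
(Proposition 6.10). Let `n ≥ 4` be even and let `U` be an open neighborhood of `0` in
`ℂ^{n+2}`. If `F` and `F′` are two `ℂ`-analytic functions on `U`, each satisfying the
axioms of a potential of the Frobenius manifold mirror to `Qⁿ` (vanishing up to order 2 at
`0`, flat identity `∂_{y₀}` with metric `g`, WDVV, the Euler condition, and the same
prescribed length-3 correlators), then `F = F′` on some neighborhood of `0`. -/
theorem quadric_frobenius_reconstruction (n : ℕ) (hn : 4 ≤ n) (hev : Even n)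
    (U : Set (Fin (n + 2) → ℂ)) (hU : IsOpen U) (h0 : (0 : Fin (n + 2) → ℂ) ∈ U)
    (F F' : (Fin (n + 2) → ℂ) → ℂ)
    (hF : IsQuadricFrobeniusPotential n U F)
    (hF' : IsQuadricFrobeniusPotential n U F') :
    F =ᶠ[nhds (0 : Fin (n + 2) → ℂ)] F' := by
  have hU0 := hU.mem_nhds h0
  have h := eventuallyEq_zero_of_iterPd ((hF.1 0 h0).sub (hF'.1 0 h0))
    (iterPd_sub_eq_zero hn hU0 hF hF')
  filter_upwards [h] with y hy
  exact sub_eq_zero.1 hy
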